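/- Let n ≥ 4 be even and let f ∈ Aut(F_n) be the automorphism with f(x_{2i−1}) = x_{2i} and f(x_{2i}) = x_{2i−1} for all 1 ≤ i ≤ n/2. Then N(f) = SAut(F_n) if det(f̄) = 1 and N(f) = Aut(F_n) if det(f̄) = −1; since det(f̄) = (−1)^{n/2}, this means N(f) = SAut(F_n) when n ≡ 0 (mod 4) and N(f) = Aut(F_n) when n ≡ 2 (mod 4). -/

import Mathlib

open Matrix

namespace NormalClosurePaper

/-- The automorphism group of the free group on `n` generators. -/
abbrev FrAut (n : ℕ) := MulAut (FreeGroup (Fin n))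

/-- Exponent sum of the generator `x_i` in a word of the free group. -/
def expSum {n : ℕ} (i : Fin n) : FreeGroup (Fin n) →* Multiplicative ℤ :=
  FreeGroup.lift fun j => Multiplicative.ofAdd (if j = i then (1 : ℤ) else 0)

/-- The abelianized matrix of an automorphism of the free group:
the `(i, j)` entry is the exponent sum of `x_i` in `f x_j`. -/
def mat {n : ℕ} (f : FrAut n) : Matrix (Fin n) (Fin n) ℤ :=
  Matrix.of fun i j => (expSum i (f (FreeGroup.of j))).toAdd

lemma expSum_apply {n : ℕ} (f : FrAut n) (i : Fin n) (w : FreeGroup (Fin n)) :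
    (expSum i (f w)).toAdd = ∑ k, mat f i k * (expSum k w).toAdd := by
  induction w using FreeGroup.induction_on with
  | C1 => simp
  | of j =>
      have h : (expSum i (f (FreeGroup.of j))).toAdd = mat f i j := rfl
      rw [h]
      simp [expSum, mul_ite, Finset.sum_ite_eq]
  | inv_of j ih =>
      simp only [_root_.map_inv, toAdd_inv, mul_neg, Finset.sum_neg_distrib, ih]
  | mul x y ihx ihy =>
      simp only [_root_.map_mul, toAdd_mul, mul_add, Finset.sum_add_distrib, ihx, ihy]

lemma mat_one {n : ℕ} : mat (1 : FrAut n) = 1 := by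
  ext i j
  simp [mat, expSum, Matrix.one_apply, eq_comm]

lemma mat_mul {n : ℕ} (f g : FrAut n) : mat (f * g) = mat f * mat g := by
  ext i j
  rw [Matrix.mul_apply]
  show (expSum i ((f * g) (FreeGroup.of j))).toAdd = _
  rw [show (f * g) (FreeGroup.of j) = f (g (FreeGroup.of j)) from rfl, expSum_apply]
  rfl

/-- The matrix of the induced map on the abelianization, as a monoid homomorphism. -/
def matHom (n : ℕ) : FrAut n →* Matrix (Fin n) (Fin n) ℤ where
  toFun := mat
  map_one' := mat_one
  map_mul' := mat_mul

/-- The homomorphism `Aut(F_n) → GL_n(ℤ)` induced by abelianization. -/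
def ρ (n : ℕ) : FrAut n →* GL (Fin n) ℤ := (matHom n).toHomUnits

/-- The composition of `ρ` with the determinant. -/
def detρ (n : ℕ) : FrAut n →* ℤˣ := (Matrix.GeneralLinearGroup.det).comp (ρ n)

/-- The special automorphism group `SAut(F_n)`: automorphisms whose induced matrix
has determinant `1`. -/
def SAut (n : ℕ) : Subgroup (FrAut n) := (detρ n).ker

/-- The Torelli subgroup `IA_n`, the kernel of `ρ`. -/
def IA (n : ℕ) : Subgroup (FrAut n) := (ρ n).ker

/-- The group of inner automorphisms of the free group. -/
def Inn (n : ℕ) : Subgroup (FrAut n) := (MulAut.conj (G := FreeGroup (Fin n))).range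

instance Inn_normal (n : ℕ) : (Inn n).Normal := by
  constructor
  rintro - ⟨a, rfl⟩ g
  refine ⟨g a, ?_⟩
  ext y
  simp [MulAut.conj_apply, MulAut.mul_apply, _root_.map_mul, _root_.map_inv]

/-- The outer automorphism group `Out(F_n)`. -/
abbrev OutF (n : ℕ) := FrAut n ⧸ Inn n

/-- The projection `Aut(F_n) → Out(F_n)`. -/
def toOut (n : ℕ) : FrAut n →* OutF n := QuotientGroup.mk' (Inn n)

lemma mat_conj {n : ℕ} (g : FreeGroup (Fin n)) : mat (MulAut.conj g) = 1 := by
  rw [← mat_one (n := n)]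
  ext i j
  simp only [mat, Matrix.of_apply, MulAut.conj_apply, MulAut.one_apply, _root_.map_mul,
    _root_.map_inv, toAdd_mul, toAdd_inv]
  omega

lemma ρ_conj {n : ℕ} (g : FreeGroup (Fin n)) : ρ n (MulAut.conj g) = 1 :=
  Units.ext (mat_conj g)

/-- The homomorphism `Out(F_n) → GL_n(ℤ)` induced by abelianization. -/
def ρOut (n : ℕ) : OutF n →* GL (Fin n) ℤ :=
  QuotientGroup.lift (Inn n) (ρ n) (by rintro - ⟨g, rfl⟩; exact ρ_conj g)

/-- The composition of `ρOut` with the determinant. -/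
def detρOut (n : ℕ) : OutF n →* ℤˣ := (Matrix.GeneralLinearGroup.det).comp (ρOut n)

/-- The special outer automorphism group `SOut(F_n)`. -/
def SOut (n : ℕ) : Subgroup (OutF n) := (detρOut n).ker

/-- Entrywise reduction `GL_n(ℤ) → GL_n(ℤ/ℓℤ)`. -/
def redGL (n ℓ : ℕ) : GL (Fin n) ℤ →* GL (Fin n) (ZMod ℓ) :=
  Units.map (RingHom.mapMatrix (Int.castRingHom (ZMod ℓ))).toMonoidHom

/-- The subgroup `GΓ_n(ℓ)` of `GL_n(ℤ)` of matrices congruent to the identity mod `ℓ`. -/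
def GGamma (n ℓ : ℕ) : Subgroup (GL (Fin n) ℤ) := (redGL n ℓ).ker

/-- The level `ℓ` congruence subgroup `Γ_n(ℓ)` (viewed inside `GL_n(ℤ)`): matrices with
determinant `1` that are congruent to the identity mod `ℓ`. -/
def GammaGL (n ℓ : ℕ) : Subgroup (GL (Fin n) ℤ) :=
  GGamma n ℓ ⊓ (Matrix.GeneralLinearGroup.det).ker

/-- Reduction `SL_n(ℤ) → SL_n(ℤ/ℓℤ)`. -/
def redSL (n ℓ : ℕ) : Matrix.SpecialLinearGroup (Fin n) ℤ →*
    Matrix.SpecialLinearGroup (Fin n) (ZMod ℓ) :=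
  Matrix.SpecialLinearGroup.map (Int.castRingHom (ZMod ℓ))

/-- Projection `SL_n(ℤ/ℓℤ) → PSL_n(ℤ/ℓℤ)`. -/
def projPSL (n ℓ : ℕ) : Matrix.SpecialLinearGroup (Fin n) (ZMod ℓ) →*
    Matrix.ProjectiveSpecialLinearGroup (Fin n) (ZMod ℓ) :=
  QuotientGroup.mk' _

/-!
Nielsen reduction shows that transvections and inversions generate the automorphism group of a free
group of finite rank: a tuple of images of the generators whose weights (length, refined by a rank
of the initial halves) cannot be lowered by transvections is Nielsen reduced, and then an
automorphism never shortens words, so its inverse maps letters to letters.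

Let `N` be a normal subgroup containing the nontrivial permutation automorphism `σ`, and let `T c a`
denote the transvection `x_a ↦ x_c x_a`. Modulo `N` one has `T i j = T (σ i) (σ j)`, so one can
choose `a`, `b`, `c` such that `T c a` and `T a b` commute modulo `N`. The relation
`T c a * T a b = T a b * T c b * T c a` then forces `T c b ∈ N`. All transvections are
conjugate, so `N` contains them all, and with them the products of two inversions. Hence `N` has
index at most two and contains every automorphism of determinant one.
-/

open FreeGroup (invRev reduce)

section CommonPrefix

variable {β : Type*} [DecidableEq β]

/-- The length of the longest common initial segment of two lists. -/
def commonPrefixLength : List β → List β → ℕ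
  | a :: l, b :: m => if a = b then commonPrefixLength l m + 1 else 0
  | _, _ => 0

lemma le_commonPrefixLength_iff {l m : List β} {k : ℕ} :
    k ≤ commonPrefixLength l m ↔ k ≤ l.length ∧ k ≤ m.length ∧ l.take k = m.take k := by
  induction l generalizing m k with
  | nil => cases k <;> simp [commonPrefixLength]
  | cons a l ih =>
    rcases m with _ | ⟨b, m⟩
    · cases k <;> simp [commonPrefixLength]
    rcases k with _ | k
    · simp
    rw [commonPrefixLength]
    split_ifs with h
    · simp [h, ih]
    · simp [h]

end CommonPrefix

section ReducedWords

variable {α : Type*}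

/-- The generator `x i` for `(i, true)` and its inverse for `(i, false)`. -/
def letter (a : α × Bool) : FreeGroup α := FreeGroup.mk [a]

lemma letter_true (i : α) : letter (i, true) = FreeGroup.of i := rfl

lemma letter_false (i : α) : letter (i, false) = (FreeGroup.of i)⁻¹ := rfl

lemma letter_not (a : α × Bool) : letter (a.1, !a.2) = (letter a)⁻¹ := rfl

lemma letter_mul_mk (a : α × Bool) (l : List (α × Bool)) :
    letter a * FreeGroup.mk l = FreeGroup.mk (a :: l) := rfl

lemma letter_ne_one (a : α × Bool) : letter a ≠ 1 := fun h => by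
  classical simpa [letter] using congrArg FreeGroup.toWord h

lemma letter_injective : Function.Injective (letter : α × Bool → FreeGroup α) := fun a b h => by
  classical simpa [letter] using congrArg FreeGroup.toWord h

lemma isReduced_invRev {L : List (α × Bool)} (h : FreeGroup.IsReduced L) :
    FreeGroup.IsReduced (invRev L) := by
  rw [invRev, FreeGroup.IsReduced, List.isChain_reverse, List.isChain_map]
  exact h.imp fun a b hab hba => congrArg not (hab hba.symm).symm

lemma isReduced_invRev_append {a b : α × Bool} {l m : List (α × Bool)}
    (hl : FreeGroup.IsReduced (a :: l)) (hm : FreeGroup.IsReduced (b :: m)) (hab : a ≠ b) :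
    FreeGroup.IsReduced (invRev (a :: l) ++ b :: m) := by
  have hjoin : FreeGroup.IsReduced ([(a.1, !a.2)] ++ b :: m) := by
    rw [List.singleton_append, FreeGroup.isReduced_cons_cons]
    exact ⟨fun h => Bool.not_eq.2 fun h' => hab (Prod.ext h h'), hm⟩
  have hl' := isReduced_invRev hl
  rw [FreeGroup.invRev_cons] at hl' ⊢
  exact hl'.append_overlap hjoin (by simp [invRev])

variable [DecidableEq α]

lemma length_reduce_invRev_append {l m : List (α × Bool)} (hl : FreeGroup.IsReduced l)
    (hm : FreeGroup.IsReduced m) :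
    (reduce (invRev l ++ m)).length + 2 * commonPrefixLength l m = l.length + m.length := by
  induction l generalizing m with
  | nil => simp [commonPrefixLength, hm.reduce_eq]
  | cons a l ih =>
    rcases m with _ | ⟨b, m⟩
    · simp [commonPrefixLength, (isReduced_invRev hl).reduce_eq]
    · rw [commonPrefixLength]
      split_ifs with hab
      · subst hab
        have hcancel : reduce (invRev (a :: l) ++ a :: m) = reduce (invRev l ++ m) := by
          apply reduce.sound
          rw [← FreeGroup.mul_mk, ← FreeGroup.mul_mk, ← FreeGroup.inv_mk, ← FreeGroup.inv_mk,
            ← List.singleton_append, ← List.singleton_append (l := m), ← FreeGroup.mul_mk,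
            ← FreeGroup.mul_mk]
          group
        have hlen := ih (m := m) (List.IsChain.tail hl) (List.IsChain.tail hm)
        rw [hcancel, List.length_cons, List.length_cons]
        omega
      · simp [(isReduced_invRev_append hl hm hab).reduce_eq]

lemma toWord_mk_of_length_le {L : List (α × Bool)} (h : L.length ≤ (FreeGroup.mk L).norm) :
    (FreeGroup.mk L).toWord = L := by
  rw [FreeGroup.toWord_mk]
  exact (reduce.red (L := L)).sublist.eq_of_length_le h

lemma length_take_toWord {x : FreeGroup α} {h : ℕ} (hx : h ≤ x.norm) :
    (x.toWord.take h).length = h :=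
  List.length_take_of_le hx

lemma mk_take_mul_mk_drop (x : FreeGroup α) (h : ℕ) :
    FreeGroup.mk (x.toWord.take h) * FreeGroup.mk (x.toWord.drop h) = x := by
  rw [FreeGroup.mul_mk, List.take_append_drop, FreeGroup.mk_toWord]

lemma take_toWord_inv {x : FreeGroup α} {h : ℕ} (hx : x.norm = 2 * h) :
    x⁻¹.toWord.take h = invRev (x.toWord.drop h) := by
  have hlen : x.toWord.length - h = h := by
    rw [FreeGroup.norm] at hx
    omega
  rw [FreeGroup.toWord_inv, invRev, invRev, List.take_reverse, List.map_drop, List.length_map, hlen]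

lemma eq_one_of_take_toWord_inv_eq {x : FreeGroup α} {h : ℕ} (hx : x.norm = 2 * h)
    (heq : x⁻¹.toWord.take h = x.toWord.take h) : x = 1 := by
  rw [← mk_take_mul_mk_drop x h, ← heq, take_toWord_inv hx, ← FreeGroup.inv_mk, inv_mul_cancel]

lemma norm_le_norm_mul_self (x : FreeGroup α) : x.norm ≤ (x * x).norm := by
  have hnorm (n : ℕ) : (x ^ (n + 1)).norm =
      (n + 1) * (FreeGroup.reduceCyclically x.toWord).length +
        2 * (FreeGroup.reduceCyclically.conjugator x.toWord).length := by
    rw [FreeGroup.norm, FreeGroup.toWord_pow,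
      FreeGroup.reduceCyclically.reduce_flatten_replicate_succ FreeGroup.isReduced_toWord]
    simp only [List.length_append, List.length_flatten, List.map_replicate, List.sum_replicate,
      FreeGroup.invRev_length, smul_eq_mul]
    ring
  have hone := hnorm 0
  have htwo := hnorm 1
  rw [zero_add, pow_one] at hone
  rw [← pow_two, htwo, hone]
  omega

lemma exists_eq_letter {x : FreeGroup α} (hx : x.norm = 1) : ∃ a, x = letter a := by
  obtain ⟨a, ha⟩ := List.length_eq_one_iff.1 hx
  exact ⟨a, by rw [letter, ← ha, FreeGroup.mk_toWord]⟩

/-- The length of the longest common initial segment of the reduced words of `x` and `y`, that is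
their Gromov product in the Cayley tree. Thus `overlap x⁻¹ y` letters of `x` cancel against as many
letters of `y` in the product `x * y`. -/
def overlap (x y : FreeGroup α) : ℕ := commonPrefixLength x.toWord y.toWord

lemma le_overlap_iff {x y : FreeGroup α} {k : ℕ} :
    k ≤ overlap x y ↔ k ≤ x.norm ∧ k ≤ y.norm ∧ x.toWord.take k = y.toWord.take k :=
  le_commonPrefixLength_iff

lemma overlap_comm (x y : FreeGroup α) : overlap x y = overlap y x :=
  eq_of_forall_le_iff fun k => by
    rw [le_overlap_iff, le_overlap_iff]
    tauto

lemma min_overlap_le (x y z : FreeGroup α) :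
    min (overlap x y) (overlap y z) ≤ overlap x z := by
  obtain ⟨hx, -, hxy⟩ := le_overlap_iff.1 (min_le_left (overlap x y) (overlap y z))
  obtain ⟨-, hz, hyz⟩ := le_overlap_iff.1 (min_le_right (overlap x y) (overlap y z))
  exact le_overlap_iff.2 ⟨hx, hz, hxy.trans hyz⟩

lemma overlap_eq_of_lt {x y z : FreeGroup α} (h : overlap x y < overlap y z) :
    overlap x z = overlap x y := by
  have h₁ := min_overlap_le x y z
  have h₂ := min_overlap_le x z y
  rw [overlap_comm z y] at h₂
  omega

lemma norm_inv_mul_add (x y : FreeGroup α) :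
    (x⁻¹ * y).norm + 2 * overlap x y = x.norm + y.norm := by
  rw [FreeGroup.norm, FreeGroup.norm, FreeGroup.norm, FreeGroup.toWord_mul, FreeGroup.toWord_inv]
  exact length_reduce_invRev_append FreeGroup.isReduced_toWord FreeGroup.isReduced_toWord

lemma norm_mul_add (x y : FreeGroup α) :
    (x * y).norm + 2 * overlap x⁻¹ y = x.norm + y.norm := by
  simpa using norm_inv_mul_add x⁻¹ y

lemma toWord_eq_take_append_drop_of_overlap_eq {x y : FreeGroup α} {h : ℕ}
    (ho : overlap x y = h) : y.toWord = x.toWord.take h ++ y.toWord.drop h := by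
  rw [(le_overlap_iff.1 ho.ge).2.2, List.take_append_drop]

lemma toWord_mul_of_overlap_eq {v w : FreeGroup α} {h : ℕ} (hv : v.norm = 2 * h)
    (ho : overlap v⁻¹ w = h) : (v * w).toWord = v.toWord.take h ++ w.toWord.drop h := by
  have hw : w = (FreeGroup.mk (v.toWord.drop h))⁻¹ * FreeGroup.mk (w.toWord.drop h) := by
    rw [FreeGroup.inv_mk, FreeGroup.mul_mk, ← take_toWord_inv hv,
      ← toWord_eq_take_append_drop_of_overlap_eq ho, FreeGroup.mk_toWord]
  have hvw : v * w = FreeGroup.mk (v.toWord.take h ++ w.toWord.drop h) := by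
    rw [← FreeGroup.mul_mk, ← mul_inv_eq_of_eq_mul (mk_take_mul_mk_drop v h).symm, mul_assoc, ← hw]
  rw [hvw]
  apply toWord_mk_of_length_le
  rw [← hvw, List.length_append, length_take_toWord (by omega), List.length_drop]
  have hnorm := norm_mul_add v w
  have hlen : w.toWord.length = w.norm := rfl
  have := (le_overlap_iff.1 ho.ge).2.1
  omega

end ReducedWords

section NielsenReduced

variable {ι α : Type*} [DecidableEq α]

/-- The tuple of the images `φ xᵢ` is Nielsen reduced: for letters `a`, `b`, `c` such that `abc` is
a reduced word, none of the images is trivial, multiplication of `φ a` and `φ b` cancels at most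
half of either of them, and a letter of `φ b` survives in the product of `φ a`, `φ b` and `φ c`. -/
structure IsNielsenReduced (φ : FreeGroup ι →* FreeGroup α) : Prop where
  apply_ne_one (a : ι × Bool) : φ (letter a) ≠ 1
  norm_le_norm_mul {a b : ι × Bool} (hab : FreeGroup.IsReduced [a, b]) :
    (φ (letter a)).norm ≤ (φ (letter a) * φ (letter b)).norm ∧
      (φ (letter b)).norm ≤ (φ (letter a) * φ (letter b)).norm
  overlap_add_overlap_lt {a b c : ι × Bool} (habc : FreeGroup.IsReduced [a, b, c]) :
    overlap (φ (letter a))⁻¹ (φ (letter b)) + overlap (φ (letter b))⁻¹ (φ (letter c)) <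
      (φ (letter b)).norm

namespace IsNielsenReduced

variable {φ : FreeGroup ι →* FreeGroup α}

lemma overlap_eq_and_length_add_overlap_le (hφ : IsNielsenReduced φ) {l : List (ι × Bool)}
    {a b : ι × Bool} (hl : FreeGroup.IsReduced (b :: a :: l)) :
    overlap (φ (letter b))⁻¹ (φ (FreeGroup.mk (a :: l))) = overlap (φ (letter b))⁻¹ (φ (letter a)) ∧
      (a :: l).length + overlap (φ (letter b))⁻¹ (φ (letter a)) ≤
        (φ (FreeGroup.mk (a :: l))).norm := by
  induction l generalizing a b with
  | nil =>
    refine ⟨rfl, ?_⟩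
    have hpos : (φ (letter a)).norm ≠ 0 := fun h => hφ.apply_ne_one a (FreeGroup.norm_eq_zero.1 h)
    have hle := (hφ.norm_le_norm_mul hl).1
    have hadd := norm_mul_add (φ (letter b)) (φ (letter a))
    change 1 + _ ≤ (φ (letter a)).norm
    omega
  | cons c l ih =>
    obtain ⟨hov, hlen⟩ := ih (List.IsChain.tail hl)
    have hlt := hφ.overlap_add_overlap_lt (List.IsChain.left_of_append (l₁ := [b, a, c]) hl)
    have hmul : φ (FreeGroup.mk (a :: c :: l)) = φ (letter a) * φ (FreeGroup.mk (c :: l)) := by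
      rw [← map_mul, letter_mul_mk]
    rw [hmul]
    have hadd := norm_mul_add (φ (letter a)) (φ (FreeGroup.mk (c :: l)))
    have hadd' := norm_inv_mul_add (φ (letter a)) (φ (letter a) * φ (FreeGroup.mk (c :: l)))
    rw [inv_mul_cancel_left] at hadd'
    refine ⟨overlap_eq_of_lt (by omega), ?_⟩
    rw [List.length_cons]
    omega

theorem norm_le_norm_apply [DecidableEq ι] (hφ : IsNielsenReduced φ) (w : FreeGroup ι) :
    w.norm ≤ (φ w).norm := by
  rcases hw : w.toWord with _ | ⟨a, l⟩
  · simp [FreeGroup.norm, hw]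
  · have hred : FreeGroup.IsReduced (a :: a :: l) :=
      FreeGroup.isReduced_cons_cons.2 ⟨fun _ => rfl, by rw [← hw]; exact FreeGroup.isReduced_toWord⟩
    have hle := (hφ.overlap_eq_and_length_add_overlap_le hred).2
    rw [← hw, FreeGroup.mk_toWord] at hle
    exact (Nat.le_add_right _ _).trans hle

end IsNielsenReduced

end NielsenReduced

section Weight

variable {ι α : Type*} [Fintype α]

/-- A numerical encoding of words, obtained by numbering the letters and reading a word as the
digits of a number, the first letter being the least significant digit. The summand `2` ensures that
the base exceeds `1`. -/
noncomputable def wordRank (L : List (α × Bool)) : ℕ :=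
  Nat.ofDigits (Fintype.card (α × Bool) + 2) (L.map fun a => (Fintype.equivFin (α × Bool) a : ℕ))

lemma wordRank_append (L M : List (α × Bool)) :
    wordRank (L ++ M) =
      wordRank L + (Fintype.card (α × Bool) + 2) ^ L.length * wordRank M := by
  simp [wordRank, Nat.ofDigits_append]

lemma eq_of_wordRank_eq {L M : List (α × Bool)} (hlen : L.length = M.length)
    (h : wordRank L = wordRank M) : L = M := by
  have hdigit (N : List (α × Bool)) :
      ∀ d ∈ N.map (fun a => (Fintype.equivFin (α × Bool) a : ℕ)),
        d < Fintype.card (α × Bool) + 2 := by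
    intro d hd
    obtain ⟨a, -, rfl⟩ := List.mem_map.1 hd
    omega
  have hmap := Nat.ofDigits_inj_of_len_eq (by omega) (by simpa using hlen) (hdigit L) (hdigit M) h
  exact List.map_injective_iff.2 (Fin.val_injective.comp (Fintype.equivFin _).injective) hmap

variable [DecidableEq α]

/-- The sum of the ranks of the initial halves of the reduced words of `x` and of `x⁻¹`. -/
noncomputable def halfRank (x : FreeGroup α) : ℕ :=
  wordRank (x.toWord.take (x.norm / 2)) + wordRank (x⁻¹.toWord.take (x.norm / 2))

lemma halfRank_eq_of_toWord_eq_append {x : FreeGroup α} {p t : List (α × Bool)}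
    (hx : x.toWord = p ++ t) (hp : 2 * p.length ≤ x.norm) :
    halfRank x = wordRank p +
      (Fintype.card (α × Bool) + 2) ^ p.length * wordRank (t.take (x.norm / 2 - p.length)) +
      wordRank ((invRev t).take (x.norm / 2)) := by
  have hlen : x.norm = p.length + t.length := by rw [FreeGroup.norm, hx, List.length_append]
  rw [halfRank, FreeGroup.toWord_inv, hx, FreeGroup.invRev_append,
    List.take_append_of_le_length (l₁ := invRev t) (by rw [FreeGroup.invRev_length]; omega),
    List.take_append, List.take_of_length_le (by omega), wordRank_append]

/-- The complexity of an element of the free group used for Nielsen reduction: its length, refined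
by the rank of its halves, compared lexicographically. -/
noncomputable def weight (x : FreeGroup α) : ℕ ×ₗ ℕ := toLex (x.norm, halfRank x)

lemma weight_inv (x : FreeGroup α) : weight x⁻¹ = weight x := by
  simp [weight, halfRank, FreeGroup.norm_inv_eq, add_comm]

lemma norm_le_of_weight_le {x y : FreeGroup α} (h : weight x ≤ weight y) : x.norm ≤ y.norm :=
  (Prod.Lex.le_iff.1 h).elim le_of_lt fun h => h.1.le

lemma halfRank_le_of_weight_le {x y : FreeGroup α} (h : weight x ≤ weight y)
    (hnorm : x.norm = y.norm) : halfRank x ≤ halfRank y :=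
  (Prod.Lex.le_iff.1 h).elim (fun hlt => absurd hnorm hlt.ne) And.right

lemma wordRank_take_le_of_weight_le {v w : FreeGroup α} {h : ℕ} (hv : v.norm = 2 * h)
    (ho : overlap v⁻¹ w = h) (hw : 2 * h ≤ w.norm) (hle : weight w ≤ weight (v * w)) :
    wordRank (v⁻¹.toWord.take h) ≤ wordRank (v.toWord.take h) := by
  have hnorm : w.norm = (v * w).norm := by
    have := norm_mul_add v w
    omega
  have hp : (v.toWord.take h).length = h := length_take_toWord (by omega)
  have hq : (v⁻¹.toWord.take h).length = h :=
    length_take_toWord (by rw [FreeGroup.norm_inv_eq]; omega)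
  have hrank := halfRank_le_of_weight_le hle hnorm
  rw [halfRank_eq_of_toWord_eq_append (toWord_eq_take_append_drop_of_overlap_eq ho) (by omega),
    halfRank_eq_of_toWord_eq_append (toWord_mul_of_overlap_eq hv ho) (by omega),
    ← hnorm, hp, hq] at hrank
  omega

/-- No weight among the images `φ xᵢ` can be lowered by multiplying this image on the left by
another one or its inverse, nor can the weight of its inverse be lowered in this way. -/
def IsWeightMinimal (φ : FreeGroup ι →* FreeGroup α) : Prop :=
  ∀ a b : ι × Bool, a.1 ≠ b.1 → weight (φ (letter b)) ≤ weight (φ (letter a) * φ (letter b))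

lemma isReduced_pair_iff {a b : ι × Bool} :
    FreeGroup.IsReduced [a, b] ↔ (a.1 = b.1 → a.2 = b.2) := by
  simp

namespace IsWeightMinimal

variable {φ : FreeGroup ι →* FreeGroup α}

lemma norm_le_norm_mul_right (hφ : IsWeightMinimal φ) {a b : ι × Bool}
    (hab : FreeGroup.IsReduced [a, b]) :
    (φ (letter b)).norm ≤ (φ (letter a) * φ (letter b)).norm := by
  by_cases h : a.1 = b.1
  · obtain rfl : a = b := Prod.ext h (isReduced_pair_iff.1 hab h)
    exact norm_le_norm_mul_self _
  · exact norm_le_of_weight_le (hφ a b h)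

lemma norm_le_norm_mul_left (hφ : IsWeightMinimal φ) {a b : ι × Bool}
    (hab : FreeGroup.IsReduced [a, b]) :
    (φ (letter a)).norm ≤ (φ (letter a) * φ (letter b)).norm := by
  have h := hφ.norm_le_norm_mul_right (isReduced_invRev hab)
  rwa [letter_not, letter_not, map_inv, map_inv, ← _root_.mul_inv_rev, FreeGroup.norm_inv_eq,
    FreeGroup.norm_inv_eq] at h

lemma wordRank_take_le (hφ : IsWeightMinimal φ) {a b : ι × Bool}
    (hab : FreeGroup.IsReduced [a, b]) {h : ℕ}
    (ha : (φ (letter a)).norm = 2 * h) (ho : overlap (φ (letter a))⁻¹ (φ (letter b)) = h) :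
    wordRank ((φ (letter a))⁻¹.toWord.take h) ≤ wordRank ((φ (letter a)).toWord.take h) := by
  by_cases hne : a.1 = b.1
  · obtain rfl : a = b := Prod.ext hne (isReduced_pair_iff.1 hab hne)
    rw [(le_overlap_iff.1 ho.ge).2.2]
  · have hadd := norm_mul_add (φ (letter a)) (φ (letter b))
    have hle := hφ.norm_le_norm_mul_left hab
    exact wordRank_take_le_of_weight_le ha ho (by omega) (hφ a b hne)

/-- If `φ b` were cancelled completely, its first half would cancel against `φ a` and its second
half against `φ c`. By minimality of the weights each of the initial halves of `φ b` and
`(φ b)⁻¹` has at most the rank of the other, so they agree and `φ b = 1`. -/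
lemma overlap_add_overlap_lt (hφ : IsWeightMinimal φ) {a b c : ι × Bool}
    (habc : FreeGroup.IsReduced [a, b, c]) (hb : φ (letter b) ≠ 1) :
    overlap (φ (letter a))⁻¹ (φ (letter b)) + overlap (φ (letter b))⁻¹ (φ (letter c)) <
      (φ (letter b)).norm := by
  have hab : FreeGroup.IsReduced [a, b] := List.IsChain.left_of_append (l₁ := [a, b]) habc
  have hbc : FreeGroup.IsReduced [b, c] := List.IsChain.tail habc
  by_contra! hle
  obtain ⟨h, hh⟩ : ∃ h, overlap (φ (letter b))⁻¹ (φ (letter c)) = h := ⟨_, rfl⟩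
  have hleft := hφ.norm_le_norm_mul_left hab
  have haddl := norm_mul_add (φ (letter a)) (φ (letter b))
  have hright := hφ.norm_le_norm_mul_right hbc
  have haddr := norm_mul_add (φ (letter b)) (φ (letter c))
  have hnorm : (φ (letter b)).norm = 2 * h := by omega
  have hrank := hφ.wordRank_take_le hbc hnorm hh
  have hrank' := hφ.wordRank_take_le (h := h) (isReduced_invRev hab)
    (by rw [letter_not, map_inv, FreeGroup.norm_inv_eq, hnorm])
    (by rw [letter_not, letter_not, map_inv, map_inv, inv_inv, overlap_comm]; omega)
  rw [letter_not, map_inv, inv_inv] at hrank'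
  refine hb (eq_one_of_take_toWord_inv_eq hnorm (eq_of_wordRank_eq ?_ (hrank.antisymm hrank')))
  rw [length_take_toWord (by rw [FreeGroup.norm_inv_eq]; omega), length_take_toWord (by omega)]

theorem isNielsenReduced (hφ : IsWeightMinimal φ) (hne : ∀ a, φ (letter a) ≠ 1) :
    IsNielsenReduced φ where
  apply_ne_one := hne
  norm_le_norm_mul hab := ⟨hφ.norm_le_norm_mul_left hab, hφ.norm_le_norm_mul_right hab⟩
  overlap_add_overlap_lt habc := hφ.overlap_add_overlap_lt habc (hne _)

end IsWeightMinimal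

lemma weight_apply_letter (φ : FreeGroup ι →* FreeGroup α) (a : ι × Bool) :
    weight (φ (letter a)) = weight (φ (FreeGroup.of a.1)) := by
  rcases a with ⟨i, _ | _⟩
  · exact (congrArg weight (map_inv φ (FreeGroup.of i))).trans (weight_inv _)
  · rfl

end Weight

section Generators

variable {α : Type*}

lemma mulAut_freeGroup_ext {f g : MulAut (FreeGroup α)}
    (h : ∀ i, f (FreeGroup.of i) = g (FreeGroup.of i)) : f = g :=
  MulEquiv.toMonoidHom_injective (FreeGroup.ext_hom _ _ h)

/-- The action of permutations on the free group by permuting the generators. -/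
def permAut : Equiv.Perm α →* MulAut (FreeGroup α) where
  toFun σ := FreeGroup.freeGroupCongr σ
  map_one' := mulAut_freeGroup_ext fun i => by simp
  map_mul' σ τ := mulAut_freeGroup_ext fun i => by simp

@[simp]
lemma permAut_of (σ : Equiv.Perm α) (i : α) :
    permAut σ (FreeGroup.of i) = FreeGroup.of (σ i) := by
  simp [permAut]

variable [DecidableEq α]

/-- The automorphism of the free group inverting the generator `xᵢ` and fixing all others. -/
def inversion (i : α) : MulAut (FreeGroup α) :=
  MonoidHom.toMulEquiv
    (FreeGroup.lift fun k => if k = i then (FreeGroup.of k)⁻¹ else FreeGroup.of k)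
    (FreeGroup.lift fun k => if k = i then (FreeGroup.of k)⁻¹ else FreeGroup.of k)
    (by ext k; by_cases h : k = i <;> simp [h])
    (by ext k; by_cases h : k = i <;> simp [h])

lemma inversion_of (i k : α) :
    inversion i (FreeGroup.of k) = if k = i then (FreeGroup.of k)⁻¹ else FreeGroup.of k := by
  simp [inversion]

@[simp]
lemma inversion_mul_self (i : α) : inversion i * inversion i = 1 :=
  mulAut_freeGroup_ext fun k => by by_cases h : k = i <;> simp [inversion_of, h]

@[simp]
lemma inversion_inv (i : α) : (inversion i)⁻¹ = inversion i :=
  inv_eq_of_mul_eq_one_left (inversion_mul_self i)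

/-- The left transvection `xⱼ ↦ xᵢ xⱼ` of the free group, fixing all other generators. -/
def transvection (i j : α) (h : i ≠ j) : MulAut (FreeGroup α) :=
  MonoidHom.toMulEquiv
    (FreeGroup.lift fun k => if k = j then FreeGroup.of i * FreeGroup.of k else FreeGroup.of k)
    (FreeGroup.lift fun k => if k = j then (FreeGroup.of i)⁻¹ * FreeGroup.of k else FreeGroup.of k)
    (by ext k; by_cases hk : k = j <;> simp [hk, h])
    (by ext k; by_cases hk : k = j <;> simp [hk, h])

lemma transvection_of {i j : α} (h : i ≠ j) (k : α) :
    transvection i j h (FreeGroup.of k) =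
      if k = j then FreeGroup.of i * FreeGroup.of k else FreeGroup.of k := by
  simp [transvection]

lemma transvection_symm_of {i j : α} (h : i ≠ j) (k : α) :
    (transvection i j h).symm (FreeGroup.of k) =
      if k = j then (FreeGroup.of i)⁻¹ * FreeGroup.of k else FreeGroup.of k := by
  simp [transvection]

lemma permAut_mul_inversion (σ : Equiv.Perm α) (i : α) :
    permAut σ * inversion i = inversion (σ i) * permAut σ :=
  mulAut_freeGroup_ext fun k => by by_cases h : k = i <;> simp [inversion_of, h]

lemma permAut_mul_transvection (σ : Equiv.Perm α) {i j : α} (h : i ≠ j) :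
    permAut σ * transvection i j h =
      transvection (σ i) (σ j) (σ.injective.ne h) * permAut σ :=
  mulAut_freeGroup_ext fun k => by by_cases h : k = j <;> simp [transvection_of, h]

lemma permAut_swap_mul_inversion {i j : α} (h : i ≠ j) :
    permAut (Equiv.swap i j) * inversion i =
      transvection i j h * (transvection j i h.symm)⁻¹ *
        (inversion j * (transvection i j h)⁻¹ * (inversion j)⁻¹) := by
  refine mulAut_freeGroup_ext fun k => ?_
  rcases eq_or_ne k i with rfl | hi
  · simp [transvection_of, transvection_symm_of, inversion_of, h]
  rcases eq_or_ne k j with rfl | hj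
  · simp [transvection_of, transvection_symm_of, inversion_of, h, h.symm]
  · simp [transvection_of, transvection_symm_of, inversion_of, hi, hj,
      Equiv.swap_apply_of_ne_of_ne]

lemma transvection_mul_transvection {a b c : α} (hab : a ≠ b) (hca : c ≠ a) (hcb : c ≠ b) :
    transvection c a hca * transvection a b hab =
      transvection a b hab * transvection c b hcb * transvection c a hca := by
  refine mulAut_freeGroup_ext fun k => ?_
  rcases eq_or_ne k a with rfl | ha
  · simp [transvection_of, hab, hcb]
  rcases eq_or_ne k b with rfl | hb
  · simp [transvection_of, ha, hcb, mul_assoc]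
  · simp [transvection_of, ha, hb]

/-- Conjugating by `inversion a * inversion b` turns the left transvection `x_a ↦ x_b x_a` into the
right transvection `x_a ↦ x_a x_b`, and left and right multiplications commute. -/
lemma commute_transvection_conj {a b c : α} (hba : b ≠ a) (hca : c ≠ a) (hcb : c ≠ b) :
    Commute (transvection c a hca)
      (inversion a * inversion b * transvection b a hba * (inversion a * inversion b)) := by
  refine mulAut_freeGroup_ext fun k => ?_
  rcases eq_or_ne k a with rfl | ha
  · simp [transvection_of, inversion_of, hba, hba.symm, hca, hcb, mul_assoc]
  rcases eq_or_ne k b with rfl | hb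
  · simp [transvection_of, inversion_of, ha]
  · simp [transvection_of, inversion_of, ha, hb]

end Generators

section Nielsen

variable {α : Type*}

lemma fst_injective_of_apply_of_eq_letter {g : MulAut (FreeGroup α)} {s : α → α × Bool}
    (hg : ∀ i, g (FreeGroup.of i) = letter (s i)) : Function.Injective fun i => (s i).1 := by
  intro i j hij
  by_cases h : (s i).2 = (s j).2
  · exact FreeGroup.of_injective (g.injective (by rw [hg, hg, Prod.ext hij h]))
  · have hs : s i = ((s j).1, !(s j).2) := Prod.ext hij (Bool.eq_not.2 h)
    have hinv : FreeGroup.of i = (FreeGroup.of j)⁻¹ :=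
      g.injective (by rw [map_inv, hg, hg, hs, letter_not])
    exact absurd (congrArg Prod.snd (letter_injective hinv : (i, true) = (j, false))) (by simp)

variable [DecidableEq α] {K : Subgroup (MulAut (FreeGroup α))}

lemma exists_mem_apply_letter_eq_mul (hT : ∀ i j h, transvection i j h ∈ K)
    (hI : ∀ i, inversion i ∈ K) {a b : α × Bool} (hab : a.1 ≠ b.1) :
    ∃ T ∈ K, T (letter b) = letter a * letter b ∧
      ∀ k ≠ b.1, T (FreeGroup.of k) = FreeGroup.of k := by
  obtain ⟨i, s⟩ := a
  obtain ⟨j, t⟩ := b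
  have hij : i ≠ j := hab
  have hTK := hT i j hij
  have hIK := hI j
  rcases s <;> rcases t <;> simp only [letter_true, letter_false]
  · exact ⟨inversion j * (transvection i j hij)⁻¹ * inversion j,
      K.mul_mem (K.mul_mem hIK (K.inv_mem hTK)) hIK,
      by simp [inversion_of, transvection_symm_of, hij],
      fun k hk => by simp [inversion_of, transvection_symm_of, hk]⟩
  · exact ⟨(transvection i j hij)⁻¹, K.inv_mem hTK, by simp [transvection_symm_of],
      fun k hk => by simp [transvection_symm_of, hk]⟩
  · exact ⟨inversion j * transvection i j hij * inversion j, K.mul_mem (K.mul_mem hIK hTK) hIK,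
      by simp [inversion_of, transvection_of, hij],
      fun k hk => by simp [inversion_of, transvection_of, hk]⟩
  · exact ⟨transvection i j hij, hTK, by simp [transvection_of],
      fun k hk => by simp [transvection_of, hk]⟩

lemma exists_mem_isWeightMinimal_mul [Fintype α] (hT : ∀ i j h, transvection i j h ∈ K)
    (hI : ∀ i, inversion i ∈ K) (φ : MulAut (FreeGroup α)) :
    ∃ k ∈ K, IsWeightMinimal (φ * k).toMonoidHom := by
  let totalWeight (ψ : MulAut (FreeGroup α)) : ℕ ×ₗ ℕ := ∑ i, weight (ψ (FreeGroup.of i))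
  obtain ⟨-, ⟨k, hk, rfl⟩, hmin⟩ := (wellFounded_lt (α := ℕ ×ₗ ℕ)).has_min
    ((fun k => totalWeight (φ * k)) '' K) ⟨_, 1, K.one_mem, rfl⟩
  refine ⟨k, hk, fun a b hab => ?_⟩
  obtain ⟨T, hTK, hTb, hTk⟩ := exists_mem_apply_letter_eq_mul hT hI hab
  by_contra! hlt
  rw [← map_mul, ← hTb, weight_apply_letter] at hlt
  have hlt' : weight ((φ * (k * T)) (FreeGroup.of b.1)) < weight ((φ * k) (FreeGroup.of b.1)) :=
    (weight_apply_letter (φ * (k * T)).toMonoidHom b).symm.trans_lt hlt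
  refine hmin _ ⟨k * T, K.mul_mem hk hTK, rfl⟩ ?_
  refine Finset.sum_lt_sum (fun i _ => ?_) ⟨b.1, Finset.mem_univ _, hlt'⟩
  rcases eq_or_ne i b.1 with rfl | hi
  · exact hlt'.le
  · rw [← mul_assoc, MulAut.mul_apply, hTk i hi]

lemma permAut_mem [Finite α] (hT : ∀ i j h, transvection i j h ∈ K)
    (hI : ∀ i, inversion i ∈ K) (σ : Equiv.Perm α) : permAut σ ∈ K := by
  induction σ using Equiv.Perm.swap_induction_on with
  | one => exact (map_one permAut).symm ▸ K.one_mem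
  | swap_mul σ i j hij ih =>
    rw [map_mul, K.mul_mem_cancel_right ih, ← K.mul_mem_cancel_right (hI i),
      permAut_swap_mul_inversion hij]
    exact K.mul_mem (K.mul_mem (hT i j _) (K.inv_mem (hT j i _)))
      (K.mul_mem (K.mul_mem (hI j) (K.inv_mem (hT i j _))) (K.inv_mem (hI j)))

lemma mem_of_apply_of_eq_ite_inv (hI : ∀ i, inversion i ∈ K) {s : Finset α}
    {g : MulAut (FreeGroup α)}
    (hg : ∀ i, g (FreeGroup.of i) = if i ∈ s then (FreeGroup.of i)⁻¹ else FreeGroup.of i) :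
    g ∈ K := by
  induction s using Finset.induction_on generalizing g with
  | empty =>
    obtain rfl : g = 1 := mulAut_freeGroup_ext fun i => by simp [hg]
    exact K.one_mem
  | insert a s ha ih =>
    rw [← K.mul_mem_cancel_right (hI a)]
    refine ih fun i => ?_
    rcases eq_or_ne i a with rfl | h
    · simp [inversion_of, hg, ha]
    · simp [inversion_of, hg, h]

lemma mem_of_apply_of_eq_letter [Finite α] (hT : ∀ i j h, transvection i j h ∈ K)
    (hI : ∀ i, inversion i ∈ K) {g : MulAut (FreeGroup α)} {s : α → α × Bool}
    (hg : ∀ i, g (FreeGroup.of i) = letter (s i)) : g ∈ K := by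
  cases nonempty_fintype α
  let σ : Equiv.Perm α := Equiv.ofBijective _
    (Finite.injective_iff_bijective.1 (fst_injective_of_apply_of_eq_letter hg))
  rw [← K.mul_mem_cancel_left (permAut_mem hT hI σ⁻¹)]
  refine mem_of_apply_of_eq_ite_inv (s := Finset.univ.filter fun i => (s i).2 = false) hI
    fun i => ?_
  have hσ : σ.symm (s i).1 = i := σ.symm_apply_apply i
  rw [MulAut.mul_apply, hg]
  rcases hs : s i with ⟨j, _ | _⟩ <;> rw [hs] at hσ <;>
    simp [letter_true, letter_false, hs, Equiv.Perm.inv_def, hσ]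

/-- **Nielsen's theorem**. -/
theorem eq_top_of_transvection_mem_of_inversion_mem [Finite α]
    (hT : ∀ i j h, transvection i j h ∈ K) (hI : ∀ i, inversion i ∈ K) : K = ⊤ := by
  cases nonempty_fintype α
  refine (Subgroup.eq_top_iff' K).2 fun φ => ?_
  obtain ⟨k, hk, hmin⟩ := exists_mem_isWeightMinimal_mul hT hI φ
  rw [← K.mul_mem_cancel_right hk]
  set ψ := φ * k
  have hψ : IsNielsenReduced ψ.toMonoidHom := hmin.isNielsenReduced fun a =>
    (map_ne_one_iff ψ ψ.injective).2 (letter_ne_one a)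
  have hletter (j : α) : ∃ a, ψ⁻¹ (FreeGroup.of j) = letter a := by
    refine exists_eq_letter (le_antisymm ?_ ?_)
    · have hle := hψ.norm_le_norm_apply (ψ⁻¹ (FreeGroup.of j))
      rwa [MulEquiv.coe_toMonoidHom, ← MulAut.mul_apply, mul_inv_cancel, MulAut.one_apply,
        FreeGroup.norm_of] at hle
    · rw [Nat.one_le_iff_ne_zero, Ne, FreeGroup.norm_eq_zero]
      exact (map_ne_one_iff _ (ψ⁻¹).injective).2 (FreeGroup.of_ne_one j)
  choose s hs using hletter
  exact K.inv_mem_iff.1 (mem_of_apply_of_eq_letter hT hI hs)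

end Nielsen

section NormalSubgroups

variable {α : Type*} [DecidableEq α] {N : Subgroup (MulAut (FreeGroup α))} [hN : N.Normal]

lemma coe_transvection_eq (σ : Equiv.Perm α) (hσ : permAut σ ∈ N) {i j : α} (h : i ≠ j) :
    (transvection i j h : MulAut (FreeGroup α) ⧸ N) =
      transvection (σ i) (σ j) (σ.injective.ne h) := by
  have hrel := congrArg (QuotientGroup.mk' N) (permAut_mul_transvection σ h)
  simpa only [map_mul, QuotientGroup.mk'_apply, (QuotientGroup.eq_one_iff _).2 hσ, one_mul,
    mul_one] using hrel

lemma inversion_mul_inversion_apply_mem {σ : Equiv.Perm α} (hσ : permAut σ ∈ N) (i : α) :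
    inversion i * inversion (σ i) ∈ N := by
  have h := N.mul_mem (hN.conj_mem _ hσ (inversion i)) (N.inv_mem hσ)
  rwa [inversion_inv, mul_assoc (inversion i), permAut_mul_inversion, ← mul_assoc,
    mul_inv_cancel_right] at h

lemma transvection_mem_of_commute {a b c : α} (hab : a ≠ b) (hca : c ≠ a) (hcb : c ≠ b)
    (h : Commute (transvection c a hca : MulAut (FreeGroup α) ⧸ N) (transvection a b hab)) :
    transvection c b hcb ∈ N := by
  have hrel := congrArg (QuotientGroup.mk' N) (transvection_mul_transvection hab hca hcb)
  simp only [map_mul, QuotientGroup.mk'_apply] at hrel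
  rw [h.eq, mul_assoc, mul_right_inj, right_eq_mul] at hrel
  exact (QuotientGroup.eq_one_iff _).1 hrel

lemma transvection_mem_of_apply_apply_eq {σ : Equiv.Perm α} (hσ : permAut σ ∈ N) {a c : α}
    (ha : σ a ≠ a) (hσa : σ (σ a) = a) (hca : c ≠ a) (hcσ : c ≠ σ a) :
    transvection c (σ a) hcσ ∈ N := by
  refine transvection_mem_of_commute ha.symm hca hcσ ?_
  have hinv : ((inversion a * inversion (σ a) : MulAut _) : MulAut (FreeGroup α) ⧸ N) = 1 :=
    (QuotientGroup.eq_one_iff _).2 (inversion_mul_inversion_apply_mem hσ a)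
  have hcomm := (commute_transvection_conj ha hca hcσ).map (QuotientGroup.mk' N)
  rw [map_mul, map_mul, QuotientGroup.mk'_apply, QuotientGroup.mk'_apply, hinv, one_mul, mul_one,
    QuotientGroup.mk'_apply] at hcomm
  rw [coe_transvection_eq σ hσ ha.symm]
  simpa only [hσa] using hcomm

lemma transvection_mem_of_apply_apply_ne {σ : Equiv.Perm α} (hσ : permAut σ ∈ N) {a : α}
    (ha : a ≠ σ a) (hσa : a ≠ σ (σ a)) : transvection a (σ (σ a)) hσa ∈ N := by
  refine transvection_mem_of_commute (σ.injective.ne ha) ha hσa ?_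
  rw [coe_transvection_eq σ hσ ha]

lemma transvection_mem_of_transvection_mem {i j : α} {hij : i ≠ j}
    (h : transvection i j hij ∈ N) {k l : α} (hkl : k ≠ l) : transvection k l hkl ∈ N := by
  obtain ⟨σ, rfl, rfl⟩ := MulAction.is_two_pretransitive_iff.1
    (Equiv.Perm.isMultiplyPretransitive α 2) hij hkl
  have hconj := hN.conj_mem _ h (permAut σ)
  rwa [permAut_mul_transvection, mul_inv_cancel_right] at hconj

theorem transvection_mem_of_permAut_mem (hα : 3 ≤ ENat.card α) {σ : Equiv.Perm α} (hne : σ ≠ 1)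
    (hσ : permAut σ ∈ N) {i j : α} (hij : i ≠ j) : transvection i j hij ∈ N := by
  obtain ⟨a, ha⟩ : ∃ a, σ a ≠ a := by
    contrapose! hne
    exact Equiv.ext hne
  by_cases hσa : σ (σ a) = a
  · obtain ⟨c, hca, hcσ⟩ := ENat.exists_ne_ne_of_three_le hα a (σ a)
    exact transvection_mem_of_transvection_mem
      (transvection_mem_of_apply_apply_eq hσ ha hσa hca hcσ) hij
  · exact transvection_mem_of_transvection_mem
      (transvection_mem_of_apply_apply_ne hσ (Ne.symm ha) (Ne.symm hσa)) hij

lemma inversion_mul_inversion_mem (hT : ∀ i j h, transvection i j h ∈ N) (i j : α) :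
    inversion i * inversion j ∈ N := by
  rcases eq_or_ne i j with rfl | hij
  · exact (inversion_mul_self i).symm ▸ N.one_mem
  have hswap {k l : α} (hkl : k ≠ l) : permAut (Equiv.swap k l) * inversion k ∈ N := by
    rw [permAut_swap_mul_inversion hkl]
    exact N.mul_mem (N.mul_mem (hT k l _) (N.inv_mem (hT l k _)))
      (hN.conj_mem _ (N.inv_mem (hT k l _)) _)
  have hmul := N.mul_mem (N.inv_mem (hswap hij)) (hswap hij.symm)
  rwa [_root_.mul_inv_rev, inversion_inv, Equiv.swap_comm j i, mul_assoc,
    inv_mul_cancel_left] at hmul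

lemma mem_or_mul_inversion_mem [Finite α] (hT : ∀ i j h, transvection i j h ∈ N) (a : α)
    (g : MulAut (FreeGroup α)) : g ∈ N ∨ g * inversion a ∈ N := by
  have htop : N ⊔ Subgroup.zpowers (inversion a) = ⊤ := by
    refine eq_top_of_transvection_mem_of_inversion_mem
      (fun i j h => Subgroup.mem_sup_left (hT i j h)) fun i => ?_
    have hmul := Subgroup.mul_mem_sup (inversion_mul_inversion_mem hT i a)
      (Subgroup.mem_zpowers (inversion a))
    rwa [mul_assoc, inversion_mul_self, mul_one] at hmul
  obtain ⟨n, hn, z, hz, rfl⟩ :=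
    Subgroup.mem_sup_of_normal_left.1 (htop.symm ▸ Subgroup.mem_top g)
  obtain ⟨k, rfl⟩ := Subgroup.mem_zpowers_iff.1 hz
  rcases Int.even_or_odd' k with ⟨r, rfl | rfl⟩
  · left
    simpa [_root_.zpow_mul, zpow_ofNat, pow_two] using hn
  · right
    simpa [_root_.zpow_add, _root_.zpow_mul, zpow_ofNat, pow_two, mul_assoc] using hn

end NormalSubgroups

section Determinant

variable {n : ℕ}

lemma coe_detρ (f : FrAut n) : (detρ n f : ℤ) = (mat f).det := rfl

lemma detρ_inversion (i : Fin n) : detρ n (inversion i) = -1 := by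
  have hmat : mat (inversion i) = Matrix.diagonal fun k => if k = i then (-1 : ℤ) else 1 := by
    ext k l
    rw [mat, Matrix.of_apply, inversion_of]
    rcases eq_or_ne l i with rfl | hl <;> rcases eq_or_ne k l with rfl | hkl <;>
      simp_all [expSum, Ne.symm]
  apply Units.ext
  rw [coe_detρ, hmat, Matrix.det_diagonal, Finset.prod_ite_eq']
  simp

lemma detρ_transvection {i j : Fin n} (h : i ≠ j) : detρ n (transvection i j h) = 1 := by
  have hmat : mat (transvection i j h) = Matrix.transvection i j 1 := by
    ext k l
    simp only [mat, expSum, transvection_of, Matrix.transvection, Matrix.of_apply,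
      Matrix.add_apply, Matrix.one_apply, Matrix.single_apply]
    rcases eq_or_ne l j with rfl | hl
    · simp [add_comm, eq_comm]
    · simp [hl, hl.symm, eq_comm]
  apply Units.ext
  rw [coe_detρ, hmat, Matrix.det_transvection_of_ne i j h, Units.val_one]

lemma detρ_permAut (σ : Equiv.Perm (Fin n)) : detρ n (permAut σ) = Equiv.Perm.sign σ := by
  have hmat : mat (permAut σ) = (σ.permMatrix ℤ)ᵀ := by
    ext i j
    simp [mat, expSum, PEquiv.toMatrix_apply]
  apply Units.ext
  rw [coe_detρ, hmat, Matrix.det_transpose, Matrix.det_permutation]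
  simp

instance SAut_normal : (SAut n).Normal := MonoidHom.normal_ker _

lemma SAut_le_of_transvection_mem {N : Subgroup (FrAut n)} [N.Normal] {i j : Fin n} {hij : i ≠ j}
    (h : transvection i j hij ∈ N) : SAut n ≤ N := by
  have hT (k l : Fin n) (hkl : k ≠ l) : transvection k l hkl ∈ N ⊓ SAut n :=
    ⟨transvection_mem_of_transvection_mem h hkl, detρ_transvection hkl⟩
  intro g hg
  rcases mem_or_mul_inversion_mem hT i g with hmem | hmem
  · exact hmem.1
  · have hdet : detρ n (g * inversion i) = 1 := hmem.2
    rw [map_mul, detρ_inversion, show detρ n g = 1 from hg] at hdet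
    exact absurd hdet (by decide)

variable {f : FrAut n}

lemma normalClosure_eq_SAut (hle : SAut n ≤ Subgroup.normalClosure {f}) (hf : detρ n f = 1) :
    Subgroup.normalClosure {f} = SAut n :=
  le_antisymm (Subgroup.normalClosure_le_normal (Set.singleton_subset_iff.2 hf)) hle

lemma normalClosure_eq_top (hle : SAut n ≤ Subgroup.normalClosure {f}) (hf : detρ n f = -1) :
    Subgroup.normalClosure {f} = ⊤ := by
  refine (Subgroup.eq_top_iff' _).2 fun g => ?_
  rcases Int.units_eq_one_or (detρ n g) with hg | hg
  · exact hle hg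
  · have hmem : f ∈ Subgroup.normalClosure {f} := Subgroup.subset_normalClosure rfl
    have hdet : detρ n (g * f) = 1 := by rw [map_mul, hg, hf, neg_mul_neg, one_mul]
    exact ((Subgroup.normalClosure {f}).mul_mem_cancel_right hmem).1 (hle hdet)

end Determinant

theorem normalClosure_of_pair_swap_general {n : ℕ} (hn : 3 ≤ n) {σ : Equiv.Perm (Fin n)}
    (hσ : σ ≠ 1) {f : FrAut n} (hf : ∀ i, f (FreeGroup.of i) = FreeGroup.of (σ i)) :
    detρ n f = Equiv.Perm.sign σ ∧
      (Equiv.Perm.sign σ = 1 → Subgroup.normalClosure {f} = SAut n) ∧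
      (Equiv.Perm.sign σ = -1 → Subgroup.normalClosure {f} = ⊤) := by
  obtain rfl : f = permAut σ := mulAut_freeGroup_ext fun i => by rw [hf, permAut_of]
  have hcard : 3 ≤ ENat.card (Fin n) := by simpa using hn
  have hij : (⟨0, by omega⟩ : Fin n) ≠ ⟨1, by omega⟩ := by simp
  have hmem : permAut σ ∈ Subgroup.normalClosure {permAut σ} := Subgroup.subset_normalClosure rfl
  have hle : SAut n ≤ Subgroup.normalClosure {permAut σ} :=
    SAut_le_of_transvection_mem (transvection_mem_of_permAut_mem hcard hσ hmem hij)
  have hdet := detρ_permAut σ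
  exact ⟨hdet, fun h => normalClosure_eq_SAut hle (hdet.trans h),
    fun h => normalClosure_eq_top hle (hdet.trans h)⟩

/-- The indexing of the `2 * m` generators by pairs: `(i, r)` stands for `2 * i + r`. -/
def pairEquiv (m : ℕ) : Fin m × Fin 2 ≃ Fin (2 * m) :=
  finProdFinEquiv.trans (finCongr (mul_comm m 2))

lemma coe_pairEquiv {m : ℕ} (i : Fin m) (r : Fin 2) : (pairEquiv m (i, r) : ℕ) = 2 * i + r := by
  simp [pairEquiv, add_comm]

/-- The permutation of `Fin (2 * m)` exchanging `2 * i` and `2 * i + 1` for all `i < m`. -/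
def pairSwap (m : ℕ) : Equiv.Perm (Fin (2 * m)) :=
  (pairEquiv m).permCongr (Equiv.prodCongrRight fun _ => Equiv.swap 0 1)

lemma pairSwap_pairEquiv {m : ℕ} (i : Fin m) (r : Fin 2) :
    pairSwap m (pairEquiv m (i, r)) = pairEquiv m (i, Equiv.swap 0 1 r) := by
  simp [pairSwap]

lemma sign_pairSwap (m : ℕ) : Equiv.Perm.sign (pairSwap m) = (-1) ^ m := by
  rw [pairSwap, Equiv.Perm.sign_permCongr, Equiv.Perm.sign_prodCongrRight]
  simp

lemma pairSwap_ne_one {m : ℕ} (hm : 0 < m) : pairSwap m ≠ 1 := fun h => by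
  have hfix := pairSwap_pairEquiv (⟨0, hm⟩ : Fin m) 0
  rw [h, Equiv.Perm.one_apply, (pairEquiv m).apply_eq_iff_eq] at hfix
  simp at hfix

lemma apply_of_eq_of_pairSwap {m : ℕ} {f : FrAut (2 * m)}
    (hf : ∀ i : Fin m,
      f (FreeGroup.of (pairEquiv m (i, 0))) = FreeGroup.of (pairEquiv m (i, 1)) ∧
      f (FreeGroup.of (pairEquiv m (i, 1))) = FreeGroup.of (pairEquiv m (i, 0)))
    (k : Fin (2 * m)) : f (FreeGroup.of k) = FreeGroup.of (pairSwap m k) := by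
  obtain ⟨⟨i, r⟩, rfl⟩ := (pairEquiv m).surjective k
  rw [pairSwap_pairEquiv]
  fin_cases r
  · exact (hf i).1
  · exact (hf i).2

/-- For even `n = 2m ≥ 4`, if `f ∈ Aut(F_n)` swaps the generators in pairs
(`x_{2i-1} ↔ x_{2i}`), then `N(f) = SAut(F_n)` if `det f̄ = 1` and `N(f) = Aut(F_n)` if
`det f̄ = -1`; since `det f̄ = (-1)^{n/2}`, this gives `N(f) = SAut(F_n)` when
`n ≡ 0 (mod 4)` and `N(f) = Aut(F_n)` when `n ≡ 2 (mod 4)`. -/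
theorem normalClosure_of_pair_swap (m : ℕ) (hm : 2 ≤ m) (f : FrAut (2 * m))
    (hf : ∀ i : Fin m,
      f (FreeGroup.of ⟨2 * i.val, by have := i.isLt; omega⟩) =
        FreeGroup.of ⟨2 * i.val + 1, by have := i.isLt; omega⟩ ∧
      f (FreeGroup.of ⟨2 * i.val + 1, by have := i.isLt; omega⟩) =
        FreeGroup.of ⟨2 * i.val, by have := i.isLt; omega⟩) :
    ((detρ (2 * m) f = 1 → Subgroup.normalClosure {f} = SAut (2 * m)) ∧
     (detρ (2 * m) f = -1 → Subgroup.normalClosure {f} = ⊤)) ∧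
    detρ (2 * m) f = (-1) ^ m ∧
    (Even m → Subgroup.normalClosure {f} = SAut (2 * m)) ∧
    (¬ Even m → Subgroup.normalClosure {f} = ⊤) := by
  have hf' : ∀ k, f (FreeGroup.of k) = FreeGroup.of (pairSwap m k) :=
    apply_of_eq_of_pairSwap fun i => by
      have hzero : pairEquiv m (i, 0) = ⟨2 * i.val, by omega⟩ := Fin.ext (coe_pairEquiv i 0)
      have hone : pairEquiv m (i, 1) = ⟨2 * i.val + 1, by omega⟩ := Fin.ext (coe_pairEquiv i 1)
      rw [hzero, hone]
      exact hf i
  obtain ⟨hdet, hpos, hneg⟩ :=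
    normalClosure_of_pair_swap_general (by omega) (pairSwap_ne_one (by omega)) hf'
  rw [sign_pairSwap] at hdet hpos hneg
  exact ⟨⟨fun h => hpos (hdet ▸ h), fun h => hneg (hdet ▸ h)⟩, hdet,
    fun heven => hpos heven.neg_one_pow,
    fun hodd => hneg (Nat.not_even_iff_odd.1 hodd).neg_one_pow⟩

end NormalClosurePaper
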